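/- Let ω : A → ℂ be a linear functional on an associative algebra A with ω(1) = 1, and for an ordered tuple J of elements of A let ω^T(J) denote the truncated (connected) functionals, defined recursively by ω(J) = Σ over ordered partitions of J into nonempty ordered blocks of the product of ω^T over the blocks. Then for any elements A_0, A_1, …, A_n of A, the expectation of the iterated commutator satisfies ω([A_n,[…,[A_1,A_0]…]]) = Σ_{I ⊆ {1,…,n}} (−1)^{|I^c|} ω^T(⟨I decreasing⟩ ∪ {0} ∪ ⟨I^c increasing⟩), i.e. in the expansion of ω of the iterated commutator only fully connected truncated functions containing the index 0 survive; all disconnected contributions cancel in pairs. -/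

import Mathlib

/-- The iterated commutator `[A_n, [A_{n-1}, …, [A_1, A_0]…]]`. -/
def iterComm {R : Type*} [Ring R] (A : ℕ → R) : ℕ → R
  | 0 => A 0
  | n + 1 => A (n + 1) * iterComm A n - iterComm A n * A (n + 1)

/-- The ordered sub-tuple of the list `J` given by the positions in `S`
(taken in increasing order of position). -/
def select (J : List ℕ) (S : Finset ℕ) : List ℕ :=
  ((List.range J.length).filter fun i => decide (i ∈ S)).map fun i => J.getD i 0

/-- The ordered sub-tuple of the list `J` given by the positions *not* in `S`
(taken in increasing order of position). -/
def selectC (J : List ℕ) (S : Finset ℕ) : List ℕ :=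
  ((List.range J.length).filter fun i => decide (i ∉ S)).map fun i => J.getD i 0

/-!
Expand each `ω(⟨I decreasing⟩ ∪ {0} ∪ ⟨Iᶜ increasing⟩)` in the signed expansion of the iterated
commutator by the recursion distinguishing the entry `0`, and let `D` be the set of indices which
do not belong to the truncated factor. If `D` is nonempty, put `s = min D`. The factor of the
remaining entries is `⟨I ∩ D decreasing⟩ ∪ ⟨D \ I increasing⟩`, in which `s` is the entry where the
two runs meet; so moving `s` between `I` and `Iᶜ` leaves this tuple as it is, does not affect
the truncated factor, and changes the sign. Hence only `D = ∅` contributes.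
-/

open Finset

section DownUp

variable {α : Type*}

theorem filter_sort (r : α → α → Prop) [DecidableRel r] [IsTrans α r] [Std.Antisymm r]
    [Std.Total r] (s : Finset α) (p : α → Prop) [DecidablePred p] :
    (s.sort r).filter p = (s.filter p).sort r := by
  classical
  have h := (List.toFinset_sort r ((s.sort_nodup r).filter p)).2 ((s.pairwise_sort r).filter p)
  rw [← h, List.toFinset_filter, sort_toFinset]
  simp only [decide_eq_true_eq]

theorem sort_insert_of_forall_rel [DecidableEq α] (r : α → α → Prop) [DecidableRel r] [IsTrans α r]
    [Std.Antisymm r] [Std.Total r] {s : Finset α} {a : α} (hr : ∀ b ∈ s, r b a) (ha : a ∉ s) :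
    (insert a s).sort r = s.sort r ++ [a] := by
  have hnodup : (s.sort r ++ [a]).Nodup := by
    simpa [List.nodup_append] using ha
  have hsorted : (s.sort r ++ [a]).Pairwise r := by
    simpa [List.pairwise_append] using hr
  rw [← (List.toFinset_sort r hnodup).2 hsorted]
  simp

variable [LinearOrder α] {I J : Finset α} {a : α}

/-- The tuple `⟨I decreasing⟩ ∪ ⟨J increasing⟩`. Both `⟨I decreasing⟩ ∪ {0} ∪ ⟨Iᶜ increasing⟩`, with
`J = {0} ∪ Iᶜ`, and its sub-tuples have this form. -/
def downUp (I J : Finset α) : List α :=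
  (I.sort (· ≤ ·)).reverse ++ J.sort (· ≤ ·)

theorem downUp_empty_empty : downUp (∅ : Finset α) ∅ = [] := by
  simp [downUp]

theorem toFinset_downUp : (downUp I J).toFinset = I ∪ J := by
  simp [downUp]

theorem nodup_downUp (h : Disjoint I J) : (downUp I J).Nodup := by
  simpa [downUp, List.nodup_append, disjoint_iff_ne] using h

theorem filter_downUp (p : α → Prop) [DecidablePred p] :
    (downUp I J).filter p = downUp (I.filter p) (J.filter p) := by
  simp only [downUp, List.filter_append, List.filter_reverse, filter_sort]

theorem downUp_insert_right_of_forall_lt (h : ∀ b ∈ J, a < b) :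
    downUp I (insert a J) = (I.sort (· ≤ ·)).reverse ++ a :: J.sort (· ≤ ·) := by
  rw [downUp, sort_insert _ (fun b hb => (h b hb).le) fun ha => (h a ha).false]

theorem downUp_insert_left_of_forall_lt (h : ∀ b ∈ I, a < b) :
    downUp (insert a I) J = (I.sort (· ≤ ·)).reverse ++ a :: J.sort (· ≤ ·) := by
  rw [downUp, sort_insert _ (fun b hb => (h b hb).le) fun ha => (h a ha).false,
    List.reverse_cons, List.append_assoc, List.singleton_append]

theorem downUp_insert_left_of_forall_gt (h : ∀ b ∈ I, b < a) :
    downUp (insert a I) J = a :: downUp I J := by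
  rw [downUp, sort_insert_of_forall_rel _ (fun b hb => (h b hb).le) fun ha => (h a ha).false,
    List.reverse_append, List.reverse_singleton, List.singleton_append, List.cons_append, downUp]

theorem downUp_insert_right_of_forall_gt (h : ∀ b ∈ J, b < a) :
    downUp I (insert a J) = downUp I J ++ [a] := by
  rw [downUp, sort_insert_of_forall_rel _ (fun b hb => (h b hb).le) fun ha => (h a ha).false,
    ← List.append_assoc, downUp]

theorem downUp_insert_left_eq_insert_right (hI : ∀ b ∈ I, a < b) (hJ : ∀ b ∈ J, a < b) :
    downUp (insert a I) J = downUp I (insert a J) := by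
  rw [downUp_insert_left_of_forall_lt hI, downUp_insert_right_of_forall_lt hJ]

end DownUp

section Cancellation

variable {α M : Type*} [AddCommGroup M]

theorem sum_powerset_insert_neg_one_pow_smul [DecidableEq α] {s : Finset α} {a : α} (ha : a ∉ s)
    (g : Finset α → M) :
    ∑ I ∈ (insert a s).powerset, (-1 : ℤ) ^ #(insert a s \ I) • g I =
      ∑ I ∈ s.powerset, (-1 : ℤ) ^ #(s \ I) • (g (insert a I) - g I) := by
  rw [sum_powerset_insert ha, ← sum_add_distrib]
  refine sum_congr rfl fun I hI => ?_
  have haI : a ∉ I := fun h => ha (mem_powerset.1 hI h)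
  rw [insert_sdiff_of_notMem _ haI, insert_sdiff_insert, sdiff_insert_of_notMem ha,
    card_insert_of_notMem fun h => ha (mem_sdiff.1 h).1, pow_succ, smul_sub, mul_neg_one, neg_smul]
  abel

theorem sum_powerset_neg_one_pow_smul_downUp_eq_zero [LinearOrder α] {U D : Finset α}
    (hDU : D ⊆ U) (hD : D.Nonempty) (g : Finset α → List α → M) :
    ∑ I ∈ U.powerset, (-1 : ℤ) ^ #(U \ I) • g (I \ D) (downUp (I ∩ D) (D \ I)) = 0 := by
  set s := D.min' hD
  have hsD : s ∈ D := D.min'_mem hD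
  rw [← insert_erase (hDU hsD), sum_powerset_insert_neg_one_pow_smul (notMem_erase s U)]
  refine sum_eq_zero fun I hI => ?_
  have hsI : s ∉ I := fun h => notMem_erase s U (mem_powerset.1 hI h)
  have hmin : ∀ b ∈ D, b ≠ s → s < b := fun b hb hbs => (D.min'_le b hb).lt_of_ne' hbs
  have htuple : downUp (insert s (I ∩ D)) (D \ insert s I) = downUp (I ∩ D) (D \ I) := by
    have hinsert : insert s (D \ insert s I) = D \ I := by grind
    rw [downUp_insert_left_eq_insert_right (by grind) (by grind), hinsert]
  rw [insert_sdiff_of_mem _ hsD, insert_inter_of_mem hsD, htuple, sub_self, smul_zero]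

end Cancellation

theorem iterComm_eq_sum_downUp {R : Type*} [Ring R] (A : ℕ → R) (n : ℕ) :
    iterComm A n = ∑ I ∈ (Icc 1 n).powerset,
      (-1 : ℤ) ^ #(Icc 1 n \ I) • ((downUp I (insert 0 (Icc 1 n \ I))).map A).prod := by
  induction n with
  | zero => simp [iterComm, downUp]
  | succ n ih =>
    rw [← insert_Icc_right_eq_Icc_add_one (by lia),
      sum_powerset_insert_neg_one_pow_smul (by simp), iterComm, ih, mul_sum, sum_mul,
      ← sum_sub_distrib]
    refine sum_congr rfl fun I hI => ?_
    have hI_lt : ∀ i ∈ I, i < n + 1 := by grind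
    have hcompl_lt : ∀ i ∈ insert 0 (Icc 1 n \ I), i < n + 1 := by grind
    have hcompl : insert 0 (insert (n + 1) (Icc 1 n) \ I) =
        insert (n + 1) (insert 0 (Icc 1 n \ I)) := by grind
    rw [insert_sdiff_insert, sdiff_insert_of_notMem (by simp), hcompl,
      downUp_insert_left_of_forall_gt hI_lt, downUp_insert_right_of_forall_gt hcompl_lt]
    simp only [List.map_cons, List.prod_cons, List.map_append, List.prod_append, List.map_nil,
      List.prod_nil, mul_one, smul_sub, mul_smul_comm, smul_mul_assoc]

theorem map_getD_filter_range {α : Type*} [DecidableEq α] {J : List α} (hJ : J.Nodup) (d : α)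
    (p : ℕ → Bool) :
    ((List.range J.length).filter p).map (fun i => J.getD i d) =
      J.filter fun a => p (J.idxOf a) := by
  have hrange : (List.range J.length).map (fun i => J.getD i d) = J :=
    List.ext_getElem (by simp) fun i _ hi => by simp [hi]
  conv_rhs => rw [← hrange]
  rw [List.filter_map, hrange]
  congr 1
  refine List.filter_congr fun i hi => ?_
  have hi : i < J.length := List.mem_range.1 hi
  simp [hi, hJ.idxOf_getElem]

theorem select_eq_filter {J : List ℕ} (hJ : J.Nodup) (S : Finset ℕ) :
    select J S = J.filter (J.idxOf · ∈ S) :=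
  map_getD_filter_range hJ 0 _

theorem selectC_eq_filter {J : List ℕ} (hJ : J.Nodup) (S : Finset ℕ) :
    selectC J S = J.filter (J.idxOf · ∉ S) :=
  map_getD_filter_range hJ 0 _

/-- `fT` is a truncation of the functional `f` on tuples of indices: `f J` is the sum of
`fT J₀ * f (J \ J₀)` over the sub-tuples `J₀` of `J` containing any given position `p`. -/
def IsTruncation {M : Type*} [NonUnitalNonAssocSemiring M] (f fT : List ℕ → M) : Prop :=
  ∀ (J : List ℕ) (p : ℕ), p < J.length →
    f J = ∑ S ∈ (range J.length).powerset with p ∈ S, fT (select J S) * f (selectC J S)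

namespace IsTruncation

variable {M : Type*}

theorem eq_sum_filter [NonUnitalNonAssocSemiring M] {f fT : List ℕ → M} (h : IsTruncation f fT)
    {J : List ℕ} (hJ : J.Nodup) {a : ℕ} (ha : a ∈ J) :
    f J = ∑ D ∈ (J.toFinset.erase a).powerset, fT (J.filter (· ∉ D)) * f (J.filter (· ∈ D)) := by
  rw [h J (J.idxOf a) (List.idxOf_lt_length_of_mem ha)]
  have getD_idxOf : ∀ x ∈ J, J.getD (J.idxOf x) 0 = x := fun x hx => by
    simp [List.idxOf_lt_length_of_mem hx]
  have idxOf_getD : ∀ i < J.length, J.idxOf (J.getD i 0) = i := fun i hi => by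
    simp [hi, hJ.idxOf_getElem]
  refine sum_nbij' (fun S => {x ∈ J.toFinset | J.idxOf x ∉ S})
    (fun D => {i ∈ range J.length | J.getD i 0 ∉ D}) ?_ ?_ ?_ ?_ ?_
  · intro S hS
    grind
  · intro D hD
    simp only [mem_filter, mem_powerset, filter_subset, mem_range, getD_idxOf a ha]
    grind
  · intro S hS
    ext i
    grind [List.mem_toFinset]
  · intro D hD
    ext x
    grind [List.mem_toFinset]
  · intro S _
    rw [select_eq_filter hJ, selectC_eq_filter hJ]
    congr 2 <;> exact List.filter_congr fun x hx => by simp [hx]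

theorem apply_downUp [NonUnitalNonAssocSemiring M] {f fT : List ℕ → M} (h : IsTruncation f fT)
    {U I : Finset ℕ} {a : ℕ} (ha : a ∉ U) (hI : I ⊆ U) :
    f (downUp I (insert a (U \ I))) = ∑ D ∈ U.powerset,
      fT (downUp (I \ D) (insert a ((U \ D) \ (I \ D)))) * f (downUp (I ∩ D) (D \ I)) := by
  have hdisj : Disjoint I (insert a (U \ I)) := by
    simpa [disjoint_sdiff] using fun haI => ha (hI haI)
  have hentries : (downUp I (insert a (U \ I))).toFinset.erase a = U := by
    rw [toFinset_downUp]; grind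
  have ha_mem : a ∈ downUp I (insert a (U \ I)) := by
    simp [← List.mem_toFinset, toFinset_downUp]
  rw [h.eq_sum_filter (nodup_downUp hdisj) ha_mem, hentries]
  refine sum_congr rfl fun D hD => ?_
  rw [filter_downUp, filter_downUp, filter_notMem_eq_sdiff, filter_mem_eq_inter]
  congr 3 <;> grind

theorem sum_downUp [NonUnitalNonAssocRing M] {f fT : List ℕ → M} (h : IsTruncation f fT)
    {U : Finset ℕ} {a : ℕ} (ha : a ∉ U) :
    ∑ I ∈ U.powerset, (-1 : ℤ) ^ #(U \ I) • f (downUp I (insert a (U \ I))) =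
      (∑ I ∈ U.powerset, (-1 : ℤ) ^ #(U \ I) • fT (downUp I (insert a (U \ I)))) * f [] := by
  calc
    _ = ∑ I ∈ U.powerset, ∑ D ∈ U.powerset, (-1 : ℤ) ^ #(U \ I) •
          (fT (downUp (I \ D) (insert a ((U \ D) \ (I \ D)))) * f (downUp (I ∩ D) (D \ I))) :=
      sum_congr rfl fun I hI => by rw [h.apply_downUp ha (mem_powerset.1 hI), smul_sum]
    _ = ∑ D ∈ U.powerset, ∑ I ∈ U.powerset, (-1 : ℤ) ^ #(U \ I) •
          (fT (downUp (I \ D) (insert a ((U \ D) \ (I \ D)))) * f (downUp (I ∩ D) (D \ I))) :=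
      sum_comm
    _ = ∑ I ∈ U.powerset, (-1 : ℤ) ^ #(U \ I) • (fT (downUp I (insert a (U \ I))) * f []) := by
      rw [sum_eq_single_of_mem ∅ (empty_mem_powerset U)]
      · simp [downUp_empty_empty]
      · exact fun D hDU hD => sum_powerset_neg_one_pow_smul_downUp_eq_zero (mem_powerset.1 hDU)
          (nonempty_iff_ne_empty.2 hD) fun K L => fT (downUp K (insert a ((U \ D) \ K))) * f L
    _ = _ := by simp only [sum_mul, smul_mul_assoc]

end IsTruncation

theorem stmt_12_general {R M : Type*} [Ring R] [NonUnitalNonAssocRing M] (ω : R →+ M) (A : ℕ → R)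
    (ωT : List ℕ → M) (hrec : IsTruncation (fun J => ω (J.map A).prod) ωT) (n : ℕ) :
    ω (iterComm A n) =
      (∑ I ∈ (Icc 1 n).powerset, (-1 : ℤ) ^ #(Icc 1 n \ I) •
        ωT ((I.sort (· ≤ ·)).reverse ++ 0 :: (Icc 1 n \ I).sort (· ≤ ·))) * ω 1 := by
  have htuple (I : Finset ℕ) : downUp I (insert 0 (Icc 1 n \ I)) =
      (I.sort (· ≤ ·)).reverse ++ 0 :: (Icc 1 n \ I).sort (· ≤ ·) :=
    downUp_insert_right_of_forall_lt fun i hi => by grind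
  simpa only [iterComm_eq_sum_downUp, map_sum, map_zsmul, htuple, List.map_nil, List.prod_nil]
    using hrec.sum_downUp (U := Icc 1 n) (a := 0) (by simp)

theorem stmt_12 {R : Type*} [Ring R] [Algebra ℂ R]
    (ω : R →ₗ[ℂ] ℂ) (hω1 : ω 1 = 1)
    (A : ℕ → R) (ωT : List ℕ → ℂ)
    -- recursive definition of the truncated (connected) functionals: for any tuple `J`
    -- and any distinguished position `p` in it,
    -- `ω(J) = ∑_{J₀ ⊆ J, p ∈ J₀} ωᵀ(J₀) ω(J ∖ J₀)` (order preserved in both factors)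
    (hrec : ∀ (J : List ℕ) (p : ℕ), p < J.length →
      ω ((J.map A).prod) =
        ∑ S ∈ (Finset.range J.length).powerset.filter (fun S => p ∈ S),
          ωT (select J S) * ω (((selectC J S).map A).prod))
    (n : ℕ) :
    ω (iterComm A n) =
      ∑ I ∈ (Finset.Icc 1 n).powerset,
        (-1 : ℂ) ^ ((Finset.Icc 1 n \ I).card) *
          ωT ((I.sort (· ≤ ·)).reverse ++ 0 :: ((Finset.Icc 1 n \ I).sort (· ≤ ·))) := by
  simpa [hω1] using stmt_12_general ω.toAddMonoidHom A ωT hrec n
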